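/- Provided 4ρ < n^{1/d}, one has Var(S) = n(1 − φ/n)^{n−1}(1 − (1 − φ/n)^{n−1}) + (n−1) ∫_{B_{2ρ}(𝟎) \ B_ρ(𝟎)} (1 − ρ^d ω_d(|y|/ρ)/n)^{n−2} dy + n(n−1)( (1 − 2^d φ/n)(1 − 2φ/n)^{n−2} − (1 − φ/n)^{2n−2} ), where the integral is over the toroidal annulus B_{2ρ}(𝟎) \ B_ρ(𝟎) ⊂ C_n and |y| denotes the toroidal distance from y to 𝟎. -/

import Mathlib

open MeasureTheory ProbabilityTheory Filter Set Metric
open scoped ENNReal NNReal BigOperators Topology Classical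

noncomputable section

/-- Side length `n^(1/d)` of the cube `C_n` of volume `n` in dimension `d`. -/
def sideLen (d n : ℕ) : ℝ := (n : ℝ) ^ ((d : ℝ)⁻¹)

/-- The cube `C_n = [0, L)^d`. -/
def box (d : ℕ) (L : ℝ) : Set (Fin d → ℝ) := Set.univ.pi fun _ => Set.Ico (0 : ℝ) L

/-- The Euclidean toroidal distance on the cube `[0, L)^d`. -/
def torDist {d : ℕ} (L : ℝ) (x y : Fin d → ℝ) : ℝ :=
  Real.sqrt (∑ i, (⨅ k : ℤ, |x i - y i - k * L|) ^ 2)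

/-- The toroidal ball `B_r(x) = {y ∈ C_n : D(x,y) ≤ r}`. -/
def torBall {d : ℕ} (L : ℝ) (x : Fin d → ℝ) (r : ℝ) : Set (Fin d → ℝ) :=
  {y ∈ box d L | torDist L x y ≤ r}

/-- Addition (translation) in the torus `[0, L)^d`. -/
def torAdd {d : ℕ} (L : ℝ) (y x : Fin d → ℝ) : Fin d → ℝ :=
  fun i => L * Int.fract ((y i + x i) / L)

/-- The uniform probability measure on the cube `[0, L)^d`. -/
def uniformBox (d : ℕ) (L : ℝ) : Measure (Fin d → ℝ) :=
  ((L.toNNReal ^ d)⁻¹ : ℝ≥0) • volume.restrict (box d L)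

/-- The joint law of `n` independent points uniformly distributed on the cube `C_n`
of volume `n`; a point configuration is `ω : Fin n → (Fin d → ℝ)`, with `U_i = ω i`. -/
def binppLaw (d n : ℕ) : Measure (Fin n → Fin d → ℝ) :=
  Measure.pi fun _ => uniformBox d (sideLen d n)

/-- The total covered volume `V` of the union of toroidal balls of radius `ρ`
centered at the `n` points. -/
def coveredVol (d n : ℕ) (ρ : ℝ) (ω : Fin n → Fin d → ℝ) : ℝ :=
  (volume (⋃ i, torBall (sideLen d n) (ω i) ρ)).toReal

/-- The number `S` of isolated points: indices `i` with `𝒰_n ∩ B_ρ(U_i) = {U_i}`. -/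
def isolCount (d n : ℕ) (ρ : ℝ) (ω : Fin n → Fin d → ℝ) : ℝ :=
  ∑ i, if Set.range ω ∩ torBall (sideLen d n) (ω i) ρ = {ω i} then 1 else 0

/-- `π_d`: the volume of the unit ball in `ℝ^d`. -/
def unitBallVol (d : ℕ) : ℝ :=
  (volume (Metric.closedBall (0 : EuclideanSpace ℝ (Fin d)) 1)).toReal

/-- `φ = π_d ρ^d`. -/
def phi (d : ℕ) (ρ : ℝ) : ℝ := unitBallVol d * ρ ^ d

/-- The standard normal cumulative distribution function. -/
def stdGaussCDF (t : ℝ) : ℝ := (gaussianReal 0 1 (Set.Iic t)).toReal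

/-- The Kolmogorov distance `D_X` between the law of the standardized version of `X`
and the standard normal. -/
def kolDist {Ω : Type*} [MeasurableSpace Ω] (P : Measure Ω) (X : Ω → ℝ) : ℝ :=
  ⨆ t : ℝ,
    |(P {ω | (X ω - ∫ x, X x ∂P) / Real.sqrt (variance X P) ≤ t}).toReal - stdGaussCDF t|

/-- A fixed unit vector in `ℝ^d` (junk value `0` if `d = 0`). -/
def unitVec (d : ℕ) : EuclideanSpace ℝ (Fin d) :=
  if h : 0 < d then EuclideanSpace.single (⟨0, h⟩ : Fin d) 1 else 0

/-- `ω_d(r)`: the volume of the union of two unit balls in `ℝ^d` whose centers are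
at distance `r` apart. -/
def omegaVol (d : ℕ) (r : ℝ) : ℝ :=
  (volume (Metric.closedBall (0 : EuclideanSpace ℝ (Fin d)) 1 ∪
      Metric.closedBall (r • unitVec d) 1)).toReal

/-- The integral `J_{r,d}(ρ) = d π_d ∫_0^r exp(-ρ^d ω_d(t)) t^{d-1} dt`. -/
def Jint (r : ℝ) (d : ℕ) (ρ : ℝ) : ℝ :=
  d * unitBallVol d * ∫ t in (0:ℝ)..r, Real.exp (-(ρ ^ d * omegaVol d t)) * t ^ (d - 1)

/-- The limiting variance density `g_V(ρ)`. -/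
def gV (d : ℕ) (ρ : ℝ) : ℝ :=
  ρ ^ d * Jint 2 d ρ - (2 ^ d * phi d ρ + phi d ρ ^ 2) * Real.exp (-(2 * phi d ρ))

/-- The limiting variance density `g_S(ρ)`. -/
def gS (d : ℕ) (ρ : ℝ) : ℝ :=
  Real.exp (-phi d ρ) - (1 + (2 ^ d - 2) * phi d ρ + phi d ρ ^ 2) * Real.exp (-(2 * phi d ρ))
    + ρ ^ d * (Jint 2 d ρ - Jint 1 d ρ)

/-- `κ_d`: the maximum number of closed unit balls in `ℝ^d` that can be packed so that
they all intersect a closed unit ball at the origin but are pairwise disjoint. -/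
def kappa (d : ℕ) : ℕ :=
  sSup {k : ℕ | ∃ c : Fin k → EuclideanSpace ℝ (Fin d),
    (∀ i, (Metric.closedBall (c i) 1 ∩ Metric.closedBall 0 1).Nonempty) ∧
    Pairwise fun i j => Disjoint (Metric.closedBall (c i) 1) (Metric.closedBall (c j) 1)}

/-- `η_V(n, ρ)`. -/
def etaV (d n : ℕ) (ρ : ℝ) : ℝ :=
  2 * phi d ρ ^ 2 * ((3 ^ d + 1) * phi d ρ + 1) ^ 2 *
      (1 + (2 ^ d + 1) * 6 ^ d * phi d ρ +
        ((2 * n - 6 ^ d * phi d ρ) / (n - 6 ^ d * phi d ρ)) * 6 ^ (2 * d) * phi d ρ ^ 2) +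
    2 * phi d ρ ^ 4 *
      (3 * (4 ^ d + 2 ^ d) * phi d ρ +
        3 * 4 ^ d * phi d ρ ^ 2 * ((2 * n - 3 * 2 ^ d * phi d ρ) / (n - 3 * 2 ^ d * phi d ρ)) +
        4 + 2 / n)

/-- `η_S(n, ρ)`. -/
def etaS (d n : ℕ) (ρ : ℝ) : ℝ :=
  2 * (1 + 2 * (kappa d : ℝ)) ^ 2 *
      (1 + (2 ^ d + 1) * 3 ^ d * phi d ρ +
        ((2 * n - 3 ^ d * phi d ρ) / (n - 3 ^ d * phi d ρ)) * 9 ^ d * phi d ρ ^ 2) +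
    (((1 : ℝ) + kappa d) ^ 2 / 2) *
      ((2 ^ d + 2 * 3 ^ d + 3) * phi d ρ +
        (2 ^ (d + 1) + 1) *
          ((2 * n - (2 ^ (d + 1) + 1) * phi d ρ) / (n - (2 ^ (d + 1) + 1) * phi d ρ)) *
          phi d ρ ^ 2 +
        (4 * n - 2) / (n - 1))

/-!
The number of isolated points is a sum of exchangeable indicators, so its variance is determined by
the probabilities that one given point, respectively two given points, are isolated. Both are
computed on the flat torus `(ℝ / L ℤ) ^ d`, where translation invariance puts one of the points at
the origin: it is isolated when the other `n - 1` points avoid its ball, and a second point at `t`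
is isolated as well if `‖t‖ > ρ` and the remaining `n - 2` points avoid both balls. For
`‖t‖ > 2 * ρ` the two balls are disjoint; for `‖t‖ ≤ 2 * ρ` they lie in a cube of side `L` around
the midpoint of their centres because `4 * ρ < L`, so their union has the same volume as in `ℝ ^ d`.
-/

section Indicators

variable {Ω : Type*} [MeasurableSpace Ω] {P : Measure Ω} [IsProbabilityMeasure P]

lemma covariance_indicator_one {E F : Set Ω} (hE : MeasurableSet E) (hF : MeasurableSet F) :
    cov[E.indicator 1, F.indicator 1; P] = P.real (E ∩ F) - P.real E * P.real F := by
  have memLp {A : Set Ω} (hA : MeasurableSet A) : MemLp (A.indicator (1 : Ω → ℝ)) 2 P :=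
    (memLp_const 1).indicator hA
  rw [covariance_eq_sub (memLp hE) (memLp hF), ← inter_indicator_one,
    integral_indicator_one (hE.inter hF), integral_indicator_one hE, integral_indicator_one hF]

lemma variance_sum_indicator_one {ι : Type*} [Fintype ι] {E : ι → Set Ω}
    (hE : ∀ i, MeasurableSet (E i)) {p q : ℝ} (hp : ∀ i, P.real (E i) = p)
    (hq : ∀ i j, i ≠ j → P.real (E i ∩ E j) = q) :
    Var[fun ω ↦ ∑ i, (E i).indicator (1 : Ω → ℝ) ω; P] =
      Fintype.card ι * (p * (1 - p)) +
        Fintype.card ι * (Fintype.card ι - 1) * (q - p ^ 2) := by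
  have row (i : ι) : ∑ j, cov[(E i).indicator 1, (E j).indicator 1; P] =
      p * (1 - p) + (Fintype.card ι - 1) * (q - p ^ 2) := by
    have off_diag : ∀ j ∈ Finset.univ.erase i,
        cov[(E i).indicator 1, (E j).indicator 1; P] = q - p ^ 2 := fun j hj ↦ by
      rw [covariance_indicator_one (hE i) (hE j), hp, hp,
        hq i j (Finset.ne_of_mem_erase hj).symm, sq]
    rw [← Finset.add_sum_erase _ _ (Finset.mem_univ i), Finset.sum_congr rfl off_diag,
      covariance_indicator_one (hE i) (hE i), inter_self, hp, Finset.sum_const, nsmul_eq_mul,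
      Finset.cast_card_erase_of_mem (Finset.mem_univ i), Finset.card_univ]
    ring
  rw [variance_fun_sum (X := fun i ↦ (E i).indicator 1)
    fun i ↦ (memLp_const 1).indicator (hE i)]
  simp only [row, Finset.sum_const, nsmul_eq_mul, Finset.card_univ]
  ring

end Indicators

section IsolatedPoints

variable {X : Type*}

/-- The point `w i` of the configuration `w` is isolated in the graph with adjacency `r`: no
point of any other index is related to it. -/
def IsIsolatedPoint {ι : Type*} (r : X → X → Prop) (w : ι → X) (i : ι) : Prop :=
  ∀ k, k ≠ i → ¬ r (w i) (w k)

variable {r : X → X → Prop}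

lemma isIsolatedPoint_insertNth_self {m : ℕ} {i : Fin (m + 1)} {x : X} {z : Fin m → X} :
    IsIsolatedPoint r (i.insertNth x z : Fin (m + 1) → X) i ↔ ∀ k, ¬ r x (z k) := by
  simp [IsIsolatedPoint, Fin.forall_iff_succAbove i, Fin.succAbove_ne]

lemma isIsolatedPoint_insertNth_succAbove {m : ℕ} {i : Fin (m + 1)} {j : Fin m} {x : X}
    {z : Fin m → X} :
    IsIsolatedPoint r (i.insertNth x z : Fin (m + 1) → X) (i.succAbove j) ↔
      ¬ r (z j) x ∧ IsIsolatedPoint r z j := by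
  simp [IsIsolatedPoint, Fin.forall_iff_succAbove i, Fin.ne_succAbove]

variable [MeasurableSpace X] {μ : Measure X}

lemma measurableSet_setOf_isIsolatedPoint {ι : Type*} [Countable ι]
    (hr : MeasurableSet {p : X × X | r p.1 p.2}) (i : ι) :
    MeasurableSet {w : ι → X | IsIsolatedPoint r w i} := by
  simp only [IsIsolatedPoint, ofPred_forall]
  have pair_measurable (k : ι) : Measurable fun w : ι → X ↦ (w i, w k) :=
    (measurable_pi_apply i).prodMk (measurable_pi_apply k)
  exact .iInter fun k ↦ .iInter fun _ ↦ pair_measurable k hr.compl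

variable [SigmaFinite μ]

lemma measure_pi_eq_lintegral_insertNth {m : ℕ} (i : Fin (m + 1)) {E : Set (Fin (m + 1) → X)}
    (hE : MeasurableSet E) :
    Measure.pi (fun _ ↦ μ) E =
      ∫⁻ x, Measure.pi (fun _ ↦ μ) {z | (i.insertNth x z : Fin (m + 1) → X) ∈ E} ∂μ := by
  have insert := (measurePreserving_piFinSuccAbove (fun _ : Fin (m + 1) ↦ μ) i).symm
  rw [← insert.measure_preimage hE.nullMeasurableSet, Measure.prod_apply (insert.measurable hE)]
  rfl

lemma measure_pi_inter_isIsolatedPoint (hr : MeasurableSet {p : X × X | r p.1 p.2})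
    {C : Set X} (hC : MeasurableSet C) {m : ℕ} (i : Fin (m + 1)) :
    Measure.pi (fun _ ↦ μ) (univ.pi (fun _ ↦ C) ∩ {w | IsIsolatedPoint r w i}) =
      ∫⁻ x in C, μ (C ∩ {z | ¬ r x z}) ^ m ∂μ := by
  rw [measure_pi_eq_lintegral_insertNth i ((MeasurableSet.univ_pi fun _ ↦ hC).inter
    (measurableSet_setOf_isIsolatedPoint hr i)), ← lintegral_indicator hC]
  refine lintegral_congr fun x ↦ ?_
  by_cases hx : x ∈ C
  · have others : {z | (i.insertNth x z : Fin (m + 1) → X) ∈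
        univ.pi (fun _ ↦ C) ∩ {w | IsIsolatedPoint r w i}} =
        univ.pi fun _ ↦ C ∩ {z | ¬ r x z} := by
      ext z
      simp [isIsolatedPoint_insertNth_self, Fin.forall_iff_succAbove i, hx, forall_and]
    rw [indicator_of_mem hx, others, Measure.pi_pi, Finset.prod_const, Finset.card_fin]
  · simp [Fin.forall_iff_succAbove i, hx]

lemma measure_pi_isIsolatedPoint (hr : MeasurableSet {p : X × X | r p.1 p.2}) {n : ℕ}
    (i : Fin n) :
    Measure.pi (fun _ ↦ μ) {w | IsIsolatedPoint r w i} =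
      ∫⁻ x, μ {z | ¬ r x z} ^ (n - 1) ∂μ := by
  obtain _ | m := n
  · exact i.elim0
  · simpa using measure_pi_inter_isIsolatedPoint (μ := μ) hr .univ i

lemma measure_pi_isIsolatedPoint_inter (hr : MeasurableSet {p : X × X | r p.1 p.2})
    (hsymm : ∀ x y, r x y → r y x) {n : ℕ} {i j : Fin n} (hij : i ≠ j) :
    Measure.pi (fun _ ↦ μ) ({w | IsIsolatedPoint r w i} ∩ {w | IsIsolatedPoint r w j}) =
      ∫⁻ x, ∫⁻ y in {y | ¬ r x y}, μ ({z | ¬ r x z} ∩ {z | ¬ r y z}) ^ (n - 2) ∂μ ∂μ := by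
  obtain _ | _ | m := n
  · exact i.elim0
  · exact (hij (Fin.ext (by omega))).elim
  obtain ⟨j, rfl⟩ := Fin.exists_succAbove_eq hij.symm
  rw [measure_pi_eq_lintegral_insertNth i ((measurableSet_setOf_isIsolatedPoint hr i).inter
    (measurableSet_setOf_isIsolatedPoint hr _))]
  refine lintegral_congr fun x ↦ ?_
  have others : {z | (i.insertNth x z : Fin (m + 2) → X) ∈
      {w | IsIsolatedPoint r w i} ∩ {w | IsIsolatedPoint r w (i.succAbove j)}} =
      univ.pi (fun _ ↦ {z | ¬ r x z}) ∩ {z | IsIsolatedPoint r z j} := by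
    ext z
    simp only [mem_inter_iff, mem_ofPred_eq, isIsolatedPoint_insertNth_self,
      isIsolatedPoint_insertNth_succAbove, mem_univ_pi]
    exact and_congr_right fun hz ↦ and_iff_right fun h ↦ hz j (hsymm _ _ h)
  exact others ▸ measure_pi_inter_isIsolatedPoint hr (measurable_prodMk_left hr.compl) j

lemma ae_injective_pi [MeasurableEq X] [NullSingletonClass μ] (n : ℕ) :
    ∀ᵐ w ∂Measure.pi (fun _ : Fin n ↦ μ), Function.Injective w := by
  have ae_ne (i j : Fin n) (hij : i ≠ j) : ∀ᵐ w ∂Measure.pi (fun _ : Fin n ↦ μ), w i ≠ w j := by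
    obtain _ | m := n
    · exact i.elim0
    obtain ⟨j, rfl⟩ := Fin.exists_succAbove_eq hij.symm
    simp only [ae_iff, ne_eq, not_not]
    rw [measure_pi_eq_lintegral_insertNth i
      (measurableSet_eq_fun (measurable_pi_apply _) (measurable_pi_apply _))]
    have slice_null (x : X) : Measure.pi (fun _ : Fin m ↦ μ) {z | x = z j} = 0 := by
      simp_rw [eq_comm (a := x), Measure.pi_hyperplane]
    simp [slice_null]
  filter_upwards [ae_all_iff.2 fun i ↦ ae_all_iff.2 fun j ↦ ae_all_iff.2 (ae_ne i j)] with w hw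
  exact fun i j ↦ not_imp_not.1 (hw i j)

end IsolatedPoints

section InvariantMeasure

lemma setOf_not_dist_le {X : Type*} [PseudoMetricSpace X] (x : X) (ρ : ℝ) :
    {z | ¬ dist x z ≤ ρ} = (closedBall x ρ)ᶜ := by
  ext z
  rw [mem_ofPred_eq, mem_compl_iff, mem_closedBall']

variable {G : Type*} [SeminormedAddCommGroup G] [MeasurableSpace G] [BorelSpace G]
  {μ : Measure G} [μ.IsAddLeftInvariant]

lemma measure_closedBall_eq_zero_center (x : G) (ρ : ℝ) :
    μ (closedBall x ρ) = μ (closedBall 0 ρ) := by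
  rw [← measure_preimage_add μ x (closedBall x ρ), preimage_add_closedBall, sub_self]

lemma lintegral_compl_closedBall_eq_zero_center (s : G) (ρ : ℝ) (F : ℝ≥0∞ → ℝ≥0∞) :
    ∫⁻ t in (closedBall s ρ)ᶜ, F (μ (closedBall s ρ ∪ closedBall t ρ)ᶜ) ∂μ =
      ∫⁻ t in (closedBall 0 ρ)ᶜ, F (μ (closedBall 0 ρ ∪ closedBall t ρ)ᶜ) ∂μ := by
  rw [← lintegral_indicator measurableSet_closedBall.compl,
    ← lintegral_indicator measurableSet_closedBall.compl, ← lintegral_add_left_eq_self _ s]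
  refine lintegral_congr fun t ↦ ?_
  have translate : (s + ·) ⁻¹' (closedBall s ρ ∪ closedBall (s + t) ρ)ᶜ =
      (closedBall 0 ρ ∪ closedBall t ρ)ᶜ := by
    simp only [preimage_compl, preimage_union, preimage_add_closedBall, sub_self,
      add_sub_cancel_left]
  simp only [indicator_apply, mem_compl_iff, mem_closedBall, dist_self_add_left, dist_zero_right]
  rw [← measure_preimage_add μ s, translate]

variable [SecondCountableTopology G]

lemma measurableSet_setOf_dist_le (ρ : ℝ) : MeasurableSet {p : G × G | dist p.1 p.2 ≤ ρ} :=
  measurableSet_le measurable_dist measurable_const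

lemma measurable_measure_closedBall_zero_union (μ : Measure G) [SFinite μ] (ρ : ℝ) :
    Measurable fun t ↦ μ (closedBall 0 ρ ∪ closedBall t ρ) := by
  have h := ((measurableSet_closedBall (x := (0 : G)) (ε := ρ)).preimage measurable_snd).union
    (measurableSet_setOf_dist_le (G := G) ρ)
  simpa only [closedBall, dist_comm] using! measurable_measure_prodMk_left h

variable [IsProbabilityMeasure μ]

lemma measureReal_pi_isIsolatedPoint_dist_le (ρ : ℝ) {n : ℕ} (i : Fin n) :
    (Measure.pi fun _ ↦ μ).real {w | IsIsolatedPoint (dist · · ≤ ρ) w i} =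
      (1 - μ.real (closedBall 0 ρ)) ^ (n - 1) := by
  rw [measureReal_def, measure_pi_isIsolatedPoint (measurableSet_setOf_dist_le ρ)]
  simp only [setOf_not_dist_le, prob_compl_eq_one_sub measurableSet_closedBall,
    measure_closedBall_eq_zero_center, lintegral_const, measure_univ, mul_one, ENNReal.toReal_pow]
  rw [← prob_compl_eq_one_sub measurableSet_closedBall, ← measureReal_def,
    probReal_compl_eq_one_sub measurableSet_closedBall]

lemma measureReal_pi_isIsolatedPoint_dist_le_inter (ρ : ℝ) {n : ℕ} {i j : Fin n} (hij : i ≠ j) :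
    (Measure.pi fun _ ↦ μ).real ({w | IsIsolatedPoint (dist · · ≤ ρ) w i} ∩
        {w | IsIsolatedPoint (dist · · ≤ ρ) w j}) =
      ∫ t in (closedBall 0 ρ)ᶜ, (1 - μ.real (closedBall 0 ρ ∪ closedBall t ρ)) ^ (n - 2) ∂μ := by
  have measurable_compl : Measurable fun t ↦ μ (closedBall (0 : G) ρ ∪ closedBall t ρ)ᶜ := by
    simpa only [prob_compl_eq_one_sub (measurableSet_closedBall.union measurableSet_closedBall)]
      using (measurable_measure_closedBall_zero_union μ ρ).const_sub 1
  rw [measureReal_def, measure_pi_isIsolatedPoint_inter (measurableSet_setOf_dist_le ρ)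
    (fun x y h ↦ dist_comm x y ▸ h) hij]
  simp only [setOf_not_dist_le, ← compl_union]
  simp only [lintegral_compl_closedBall_eq_zero_center _ ρ (· ^ (n - 2)), lintegral_const,
    measure_univ, mul_one]
  rw [← integral_toReal (measurable_compl.pow_const _).aemeasurable
    (ae_of_all _ fun _ ↦ ENNReal.pow_lt_top (measure_lt_top _ _))]
  simp only [ENNReal.toReal_pow, ← measureReal_def, probReal_compl_eq_one_sub
    (measurableSet_closedBall.union measurableSet_closedBall)]

lemma variance_sum_isIsolatedPoint_dist_le (ρ : ℝ) (n : ℕ) :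
    Var[fun w ↦ ∑ i, {w | IsIsolatedPoint (dist · · ≤ ρ) w i}.indicator (1 : (Fin n → G) → ℝ) w;
        Measure.pi fun _ ↦ μ] =
      n * ((1 - μ.real (closedBall 0 ρ)) ^ (n - 1) *
          (1 - (1 - μ.real (closedBall 0 ρ)) ^ (n - 1))) +
        n * (n - 1) *
          (∫ t in (closedBall 0 ρ)ᶜ, (1 - μ.real (closedBall 0 ρ ∪ closedBall t ρ)) ^ (n - 2) ∂μ -
            ((1 - μ.real (closedBall 0 ρ)) ^ (n - 1)) ^ 2) := by
  rw [variance_sum_indicator_one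
    (measurableSet_setOf_isIsolatedPoint (measurableSet_setOf_dist_le ρ))
    (measureReal_pi_isIsolatedPoint_dist_le ρ)
    fun _ _ ↦ measureReal_pi_isIsolatedPoint_dist_le_inter ρ, Fintype.card_fin]

end InvariantMeasure

section EuclideanBalls

open scoped Pointwise

lemma volume_closedBall_union_closedBall_congr {E : Type*} [NormedAddCommGroup E]
    [InnerProductSpace ℝ E] [FiniteDimensional ℝ E] [MeasurableSpace E] [BorelSpace E] {v w : E}
    (h : ‖v‖ = ‖w‖) (r : ℝ) :
    volume (closedBall 0 r ∪ closedBall v r) = volume (closedBall 0 r ∪ closedBall w r) := by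
  set f := (ℝ ∙ (v - w))ᗮ.reflection
  have hf : f v = w := Submodule.reflection_sub h
  rw [← f.measurePreserving.measure_preimage (s := closedBall 0 r ∪ closedBall w r)
    (measurableSet_closedBall.union measurableSet_closedBall).nullMeasurableSet, preimage_union,
    f.preimage_closedBall, f.preimage_closedBall, map_zero, ← hf, f.symm_apply_apply]

variable {d : ℕ}

lemma volume_real_closedBall (x : EuclideanSpace ℝ (Fin d)) {r : ℝ} (hr : 0 ≤ r) :
    volume.real (closedBall x r) = phi d r := by
  rw [phi, unitBallVol, ← measureReal_def, Measure.addHaar_real_closedBall' volume x hr,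
    finrank_euclideanSpace_fin, mul_comm]

lemma norm_unitVec (hd : 1 ≤ d) : ‖unitVec d‖ = 1 := by
  rw [unitVec, dif_pos (show 0 < d from hd), PiLp.norm_single, norm_one]

lemma volume_real_closedBall_union_closedBall (hd : 1 ≤ d) {r : ℝ} (hr : 0 < r)
    (v : EuclideanSpace ℝ (Fin d)) :
    volume.real (closedBall 0 r ∪ closedBall v r) = r ^ d * omegaVol d (‖v‖ / r) := by
  have scaled : closedBall 0 r ∪ closedBall v r =
      r • (closedBall (0 : EuclideanSpace ℝ (Fin d)) 1 ∪ closedBall (r⁻¹ • v) 1) := by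
    rw [smul_set_union, smul_closedBall' hr.ne', smul_closedBall' hr.ne', smul_zero,
      smul_inv_smul₀ hr.ne', Real.norm_of_nonneg hr.le, mul_one]
  have norm_eq : ‖r⁻¹ • v‖ = ‖(‖v‖ / r) • unitVec d‖ := by
    rw [norm_smul, norm_smul, norm_unitVec hd, Real.norm_of_nonneg (by positivity),
      Real.norm_of_nonneg (by positivity), mul_one, inv_mul_eq_div]
  rw [scaled, measureReal_def, Measure.addHaar_smul,
    volume_closedBall_union_closedBall_congr norm_eq, ENNReal.toReal_mul,
    finrank_euclideanSpace_fin, abs_of_pos (pow_pos hr d),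
    ENNReal.toReal_ofReal (pow_nonneg hr.le d), omegaVol]

end EuclideanBalls

section FlatTorus

/-- The flat torus `(ℝ / L ℤ) ^ d` with its Euclidean (`ℓ²`) distance. -/
abbrev FlatTorus (d : ℕ) (L : ℝ) : Type := PiLp 2 fun _ : Fin d ↦ AddCircle L

/-- The covering map from `ℝ ^ d` to the flat torus. The domain is the plain function space, as in
`torDist`; Euclidean distances upstairs are measured after `WithLp.toLp 2`. -/
def toTorus {d : ℕ} (L : ℝ) (x : Fin d → ℝ) : FlatTorus d L :=
  WithLp.toLp 2 fun i ↦ (x i : AddCircle L)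

/-- Lebesgue measure on the flat torus, of total mass `L ^ d`. -/
def torusVolume (d : ℕ) (L : ℝ) [Fact (0 < L)] : Measure (FlatTorus d L) :=
  (volume : Measure (Fin d → AddCircle L)).map (WithLp.toLp 2)

variable {d : ℕ} {L : ℝ}

lemma iInf_abs_sub_intCast_mul (u : ℝ) : ⨅ k : ℤ, |u - k * L| = ‖(u : AddCircle L)‖ := by
  apply le_antisymm
  · rw [AddCircle.norm_eq]
    exact ciInf_le ⟨0, by rintro _ ⟨k, rfl⟩; positivity⟩ (round (L⁻¹ * u))
  · refine le_ciInf fun k ↦ ?_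
    have coe_eq : ((u - k * L : ℝ) : AddCircle L) = u := by
      rw [← zsmul_eq_mul, AddCircle.coe_sub, AddCircle.coe_zsmul, AddCircle.coe_period, smul_zero,
        sub_zero]
    exact coe_eq ▸ QuotientAddGroup.norm_mk_le_norm

lemma dist_toTorus (x y : Fin d → ℝ) : dist (toTorus L x) (toTorus L y) = torDist L x y := by
  rw [PiLp.dist_eq_of_L2, torDist]
  simp only [iInf_abs_sub_intCast_mul, toTorus, dist_eq_norm, AddCircle.coe_sub]

lemma toTorus_zero : toTorus L (0 : Fin d → ℝ) = 0 := rfl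

lemma dist_toTorus_le (x y : Fin d → ℝ) :
    dist (toTorus L x) (toTorus L y) ≤ dist (WithLp.toLp 2 x) (WithLp.toLp 2 y) := by
  rw [PiLp.dist_eq_of_L2, PiLp.dist_eq_of_L2]
  gcongr with i
  simp only [toTorus, dist_eq_norm, ← AddCircle.coe_sub]
  exact QuotientAddGroup.norm_mk_le_norm

lemma norm_coe_addCircle_of_add_lt {u : ℝ} (h : |u| + ‖(u : AddCircle L)‖ < L) :
    ‖(u : AddCircle L)‖ = |u| := by
  rw [AddCircle.norm_eq] at h ⊢
  generalize round (L⁻¹ * u) = k at h ⊢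
  have period_lt : |(k : ℝ)| * |L| < 1 * |L| := by
    calc |(k : ℝ)| * |L| = |u - (u - k * L)| := by rw [sub_sub_cancel, abs_mul]
      _ ≤ |u| + |u - k * L| := abs_sub _ _
      _ < 1 * |L| := h.trans_le (by rw [one_mul]; exact le_abs_self L)
  have abs_lt_one : |(k : ℝ)| < 1 := lt_of_mul_lt_mul_right period_lt (abs_nonneg L)
  have hk : k = 0 := Int.abs_lt_one_iff.1 (mod_cast abs_lt_one)
  simp only [hk, Int.cast_zero, zero_mul, sub_zero]

lemma toTorus_preimage_closedBall_inter_cube {c y : Fin d → ℝ} {r : ℝ}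
    (h : dist (WithLp.toLp 2 c) (WithLp.toLp 2 y) + r < L / 2) :
    toTorus L ⁻¹' closedBall (toTorus L y) r ∩
        univ.pi (fun i ↦ Ioc (c i - L / 2) (c i - L / 2 + L)) =
      WithLp.toLp 2 ⁻¹' closedBall (WithLp.toLp 2 y) r := by
  have abs_sub_le (x z : Fin d → ℝ) (i : Fin d) :
      |x i - z i| ≤ dist (WithLp.toLp 2 x) (WithLp.toLp 2 z) := by
    rw [dist_eq_norm]
    exact PiLp.norm_apply_le (WithLp.toLp 2 x - WithLp.toLp 2 z) i
  ext x
  simp only [mem_inter_iff, mem_preimage, mem_closedBall]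
  constructor
  · rintro ⟨hxy, hx⟩
    have coord (i : Fin d) : dist (toTorus L x i) (toTorus L y i) = dist (x i) (y i) := by
      have torus_le : dist (toTorus L x i) (toTorus L y i) ≤ r :=
        (PiLp.dist_apply_le _ _ i).trans hxy
      simp only [toTorus, dist_eq_norm, ← AddCircle.coe_sub] at torus_le ⊢
      refine norm_coe_addCircle_of_add_lt ?_
      have hxc : |x i - c i| ≤ L / 2 := by
        rw [abs_le]
        constructor <;> linarith [(hx i trivial).1, (hx i trivial).2]
      linarith [abs_sub_le c y i, _root_.abs_sub_le (x i) (c i) (y i)]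
    simpa only [PiLp.dist_eq_of_L2, coord] using hxy
  · refine fun hxy ↦ ⟨(dist_toTorus_le x y).trans hxy, fun i _ ↦ ?_⟩
    have hxc : |x i - c i| < L / 2 :=
      (abs_sub_le x c i).trans_lt <| (dist_triangle_right _ _ (WithLp.toLp 2 y)).trans_lt <| by
        linarith
    rw [abs_lt] at hxc
    constructor <;> linarith

variable [Fact (0 < L)]

instance : (torusVolume d L).IsAddLeftInvariant :=
  isAddLeftInvariant_map (WithLp.addEquiv 2 (Fin d → AddCircle L)).symm.toAddMonoidHom.toAddHom
    (WithLp.measurable_toLp 2 _) (WithLp.addEquiv 2 _).symm.surjective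

instance : IsFiniteMeasure (torusVolume d L) :=
  Measure.isFiniteMeasure_map _ _

lemma measurePreserving_toTorus (a : Fin d → ℝ) :
    MeasurePreserving (toTorus L) (volume.restrict (univ.pi fun i ↦ Ioc (a i) (a i + L)))
      (torusVolume d L) := by
  refine (WithLp.measurable_toLp 2 _).measurePreserving _ |>.comp ?_
  rw [volume_pi, Measure.restrict_pi_pi, volume_pi]
  exact measurePreserving_pi _ _ fun i ↦ AddCircle.measurePreserving_mk L (a i)

lemma measurePreserving_toTorus_box :
    MeasurePreserving (toTorus L) (volume.restrict (box d L)) (torusVolume d L) := by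
  have ae_eq : box d L =ᵐ[volume] univ.pi fun _ ↦ Ioc 0 (0 + L) := by
    rw [zero_add]
    exact Measure.univ_pi_Ico_ae_eq_Icc.trans Measure.univ_pi_Ioc_ae_eq_Icc.symm
  rw [Measure.restrict_congr_set ae_eq]
  exact measurePreserving_toTorus 0

lemma torusVolume_closedBall_union_closedBall {c y z : Fin d → ℝ} {r : ℝ}
    (hy : dist (WithLp.toLp 2 c) (WithLp.toLp 2 y) + r < L / 2)
    (hz : dist (WithLp.toLp 2 c) (WithLp.toLp 2 z) + r < L / 2) :
    torusVolume d L (closedBall (toTorus L y) r ∪ closedBall (toTorus L z) r) =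
      volume (closedBall (WithLp.toLp 2 y) r ∪ closedBall (WithLp.toLp 2 z) r) := by
  have cover := measurePreserving_toTorus (L := L) fun i ↦ c i - L / 2
  have hS := (measurableSet_closedBall (x := toTorus L y) (ε := r)).union
    (measurableSet_closedBall (x := toTorus L z) (ε := r))
  rw [← cover.measure_preimage hS.nullMeasurableSet, Measure.restrict_apply (cover.measurable hS),
    preimage_union, union_inter_distrib_right, toTorus_preimage_closedBall_inter_cube hy,
    toTorus_preimage_closedBall_inter_cube hz, ← preimage_union,
    (PiLp.volume_preserving_toLp (Fin d)).measure_preimage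
      (measurableSet_closedBall.union measurableSet_closedBall).nullMeasurableSet]

lemma exists_toTorus_eq (t : FlatTorus d L) :
    ∃ y : Fin d → ℝ, toTorus L y = t ∧ ‖WithLp.toLp 2 y‖ = ‖t‖ := by
  have coord (i : Fin d) : ∃ u : ℝ, (u : AddCircle L) = t i ∧ |u| = ‖t i‖ := by
    obtain ⟨u, hu, hut⟩ : t i ∈ QuotientAddGroup.mk '' Ioc (-(L / 2)) (-(L / 2) + L) :=
      AddCircle.coe_image_Ioc_eq L (-(L / 2)) ▸ mem_univ _
    have hL : 0 < L := Fact.out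
    refine ⟨u, hut, ?_⟩
    rw [← hut, eq_comm, AddCircle.norm_coe_eq_abs_iff L hL.ne', abs_of_pos hL, abs_le]
    exact ⟨hu.1.le, by linarith [hu.2]⟩
  choose y hyt hy using coord
  refine ⟨y, PiLp.ext hyt, ?_⟩
  simp only [PiLp.norm_eq_of_L2, Real.norm_eq_abs, hy]

lemma torusVolume_real_closedBall_zero {r : ℝ} (hr : 0 ≤ r) (h2r : 2 * r < L) :
    (torusVolume d L).real (closedBall 0 r) = phi d r := by
  have center : dist (WithLp.toLp 2 (0 : Fin d → ℝ)) (WithLp.toLp 2 0) + r < L / 2 := by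
    rw [dist_self]
    linarith
  have h := torusVolume_closedBall_union_closedBall center center
  rw [union_self, union_self, toTorus_zero] at h
  rw [measureReal_def, h, ← measureReal_def, volume_real_closedBall _ hr]

lemma torusVolume_real_union_of_norm_le (hd : 1 ≤ d) {ρ : ℝ} (hρ : 0 < ρ) (h4ρ : 4 * ρ < L)
    {t : FlatTorus d L} (ht : ‖t‖ ≤ 2 * ρ) :
    (torusVolume d L).real (closedBall 0 ρ ∪ closedBall t ρ) =
      ρ ^ d * omegaVol d (‖t‖ / ρ) := by
  obtain ⟨y, rfl, hy⟩ := exists_toTorus_eq t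
  -- Both balls lie in the ball of radius `2 * ρ < L / 2` around the midpoint of their centres.
  set m := midpoint ℝ 0 (WithLp.toLp 2 y)
  have dist_zero : dist m 0 + ρ < L / 2 := by
    rw [dist_midpoint_left, Real.norm_two, dist_zero_left, hy]
    linarith
  have dist_y : dist m (WithLp.toLp 2 y) + ρ < L / 2 := by
    rw [dist_midpoint_right, Real.norm_two, dist_zero_left, hy]
    linarith
  have h := torusVolume_closedBall_union_closedBall (c := m.ofLp) (y := 0) dist_zero dist_y
  rw [toTorus_zero, WithLp.toLp_zero] at h
  rw [measureReal_def, h, ← measureReal_def, volume_real_closedBall_union_closedBall hd hρ, hy]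

lemma torusVolume_real_union_of_lt_norm {ρ : ℝ} (hρ : 0 ≤ ρ) (h2ρ : 2 * ρ < L)
    {t : FlatTorus d L} (ht : 2 * ρ < ‖t‖) :
    (torusVolume d L).real (closedBall 0 ρ ∪ closedBall t ρ) = 2 * phi d ρ := by
  have disjoint : Disjoint (closedBall 0 ρ) (closedBall t ρ) :=
    closedBall_disjoint_closedBall (by rwa [dist_zero_left, ← two_mul])
  rw [measureReal_union disjoint measurableSet_closedBall, measureReal_def (s := closedBall t ρ),
    measure_closedBall_eq_zero_center, ← measureReal_def, torusVolume_real_closedBall_zero hρ h2ρ,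
    two_mul]

end FlatTorus

section UniformPoints

/-- The uniform probability measure on the flat torus. -/
def uniformTorus (d : ℕ) (L : ℝ) [Fact (0 < L)] : Measure (FlatTorus d L) :=
  ((L.toNNReal ^ d)⁻¹ : ℝ≥0) • torusVolume d L

lemma uniformBox_singleton {d : ℕ} (hd : 1 ≤ d) (L : ℝ) (x : Fin d → ℝ) :
    uniformBox d L {x} = 0 := by
  have : Nonempty (Fin d) := ⟨⟨0, hd⟩⟩
  rw [uniformBox, Measure.smul_apply, measure_singleton, smul_zero]

lemma measurableSet_box (d : ℕ) (L : ℝ) : MeasurableSet (box d L) :=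
  .univ_pi fun _ ↦ measurableSet_Ico

lemma ae_mem_box (d : ℕ) (L : ℝ) : ∀ᵐ x ∂uniformBox d L, x ∈ box d L :=
  Measure.ae_smul_measure (ae_restrict_mem (measurableSet_box d L)) _

lemma range_inter_torBall_eq_singleton_iff {d : ℕ} {L ρ : ℝ} (hρ : 0 ≤ ρ) {ι : Type*}
    {w : ι → Fin d → ℝ} (hinj : Function.Injective w) (hbox : ∀ i, w i ∈ box d L) (i : ι) :
    range w ∩ torBall L (w i) ρ = {w i} ↔
      IsIsolatedPoint (dist · · ≤ ρ) (fun k ↦ toTorus L (w k)) i := by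
  have mem_torBall (k : ι) : w k ∈ torBall L (w i) ρ ↔
      dist (toTorus L (w i)) (toTorus L (w k)) ≤ ρ := by
    rw [dist_toTorus]
    exact and_iff_right (hbox k)
  have self_mem : w i ∈ torBall L (w i) ρ := (mem_torBall i).2 (by rwa [dist_self])
  rw [eq_singleton_iff_unique_mem, and_iff_right ⟨mem_range_self i, self_mem⟩]
  simp only [IsIsolatedPoint, mem_inter_iff, and_imp, forall_mem_range, mem_torBall, hinj.eq_iff]
  exact forall_congr' fun k ↦ not_imp_not.symm.trans Iff.rfl

variable {d : ℕ} {L : ℝ} [Fact (0 < L)]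

instance : (uniformTorus d L).IsAddLeftInvariant :=
  inferInstanceAs (((L.toNNReal ^ d)⁻¹ : ℝ≥0) • torusVolume d L).IsAddLeftInvariant

instance : IsProbabilityMeasure (uniformBox d L) where
  measure_univ := by
    have hL : L.toNNReal ≠ 0 := (Real.toNNReal_pos.2 Fact.out).ne'
    have volume_box : volume (box d L) = (L.toNNReal ^ d : ℝ≥0) := by
      simp [box, Real.volume_pi_Ico, ENNReal.ofReal]
    rw [uniformBox, Measure.smul_apply, Measure.restrict_apply_univ, volume_box, ENNReal.smul_def,
      smul_eq_mul, ← ENNReal.coe_mul, inv_mul_cancel₀ (pow_ne_zero d hL), ENNReal.coe_one]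

lemma measurePreserving_toTorus_uniformBox :
    MeasurePreserving (toTorus L) (uniformBox d L) (uniformTorus d L) :=
  measurePreserving_toTorus_box.smul_measure _

instance : IsProbabilityMeasure (uniformTorus d L) :=
  (measurePreserving_toTorus_uniformBox (d := d) (L := L)).map_eq ▸
    Measure.isProbabilityMeasure_map measurePreserving_toTorus_uniformBox.measurable.aemeasurable

lemma uniformTorus_real_apply (s : Set (FlatTorus d L)) :
    (uniformTorus d L).real s = (torusVolume d L).real s / L ^ d := by
  have hL : 0 ≤ L := (Fact.out : 0 < L).le
  rw [uniformTorus, measureReal_nnreal_smul_apply, NNReal.coe_inv, NNReal.coe_pow,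
    Real.coe_toNNReal L hL, inv_mul_eq_div]

lemma setIntegral_uniformTorus_eq_box {s : Set (FlatTorus d L)} (hs : MeasurableSet s)
    {f : FlatTorus d L → ℝ} (hf : Measurable f) :
    ∫ t in s, f t ∂uniformTorus d L =
      (L ^ d)⁻¹ * ∫ y in {y ∈ box d L | toTorus L y ∈ s}, f (toTorus L y) := by
  have cover := measurePreserving_toTorus_box (d := d) (L := L)
  have hL : 0 ≤ L := (Fact.out : 0 < L).le
  rw [uniformTorus, Measure.restrict_smul, integral_smul_nnreal_measure, NNReal.smul_def,
    smul_eq_mul, NNReal.coe_inv, NNReal.coe_pow, Real.coe_toNNReal L hL, ← cover.map_eq,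
    setIntegral_map hs hf.aestronglyMeasurable cover.measurable.aemeasurable,
    Measure.restrict_restrict (cover.measurable hs), inter_comm]
  rfl

variable {ρ : ℝ}

lemma measurable_one_sub_uniformTorus_union_pow (m : ℕ) :
    Measurable fun t ↦
      (1 - (uniformTorus d L).real (closedBall 0 ρ ∪ closedBall t ρ)) ^ m :=
  ((measurable_measure_closedBall_zero_union _ ρ).ennreal_toReal.const_sub 1).pow_const m

lemma setIntegral_uniformTorus_annulus (hd : 1 ≤ d) (hρ : 0 < ρ) (h4ρ : 4 * ρ < L) (m : ℕ) :
    ∫ t in closedBall 0 (2 * ρ) \ closedBall 0 ρ,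
        (1 - (uniformTorus d L).real (closedBall 0 ρ ∪ closedBall t ρ)) ^ m ∂uniformTorus d L =
      (L ^ d)⁻¹ * ∫ y in torBall L (0 : Fin d → ℝ) (2 * ρ) \ torBall L (0 : Fin d → ℝ) ρ,
        (1 - ρ ^ d * omegaVol d (torDist L (0 : Fin d → ℝ) y / ρ) / L ^ d) ^ m := by
  have annulus_measurable : MeasurableSet (closedBall (0 : FlatTorus d L) (2 * ρ) \
      closedBall 0 ρ) := measurableSet_closedBall.diff measurableSet_closedBall
  have torDist_zero (y : Fin d → ℝ) : torDist L (0 : Fin d → ℝ) y = ‖toTorus L y‖ := by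
    rw [← dist_toTorus, toTorus_zero, dist_zero_left]
  have annulus_eq : {y ∈ box d L | toTorus L y ∈ closedBall 0 (2 * ρ) \ closedBall 0 ρ} =
      torBall L (0 : Fin d → ℝ) (2 * ρ) \ torBall L (0 : Fin d → ℝ) ρ := by
    ext y
    simp only [torBall, torDist_zero, Set.mem_sdiff, mem_ofPred_eq, mem_closedBall_zero_iff]
    tauto
  rw [setIntegral_uniformTorus_eq_box annulus_measurable
    (measurable_one_sub_uniformTorus_union_pow m), ← annulus_eq]
  congr 1
  refine setIntegral_congr_fun ((measurableSet_box d L).inter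
    (measurePreserving_toTorus_box.measurable annulus_measurable)) fun y hy ↦ ?_
  simp only [uniformTorus_real_apply, torDist_zero]
  rw [torusVolume_real_union_of_norm_le hd hρ h4ρ (mem_closedBall_zero_iff.1 hy.2.1)]

lemma setIntegral_uniformTorus_compl_closedBall (hρ : 0 ≤ ρ) (h4ρ : 4 * ρ < L) (m : ℕ) :
    ∫ t in (closedBall 0 (2 * ρ))ᶜ,
        (1 - (uniformTorus d L).real (closedBall 0 ρ ∪ closedBall t ρ)) ^ m ∂uniformTorus d L =
      (1 - 2 ^ d * phi d ρ / L ^ d) * (1 - 2 * phi d ρ / L ^ d) ^ m := by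
  have far (t : FlatTorus d L) (ht : t ∈ (closedBall 0 (2 * ρ))ᶜ) :
      (1 - (uniformTorus d L).real (closedBall 0 ρ ∪ closedBall t ρ)) ^ m =
        (1 - 2 * phi d ρ / L ^ d) ^ m := by
    rw [mem_compl_iff, mem_closedBall_zero_iff, not_le] at ht
    rw [uniformTorus_real_apply, torusVolume_real_union_of_lt_norm hρ (by linarith) ht]
  have phi_two_mul : phi d (2 * ρ) = 2 ^ d * phi d ρ := by
    rw [phi, phi, mul_pow, mul_left_comm]
  rw [setIntegral_congr_fun measurableSet_closedBall.compl far, setIntegral_const, smul_eq_mul,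
    probReal_compl_eq_one_sub measurableSet_closedBall, uniformTorus_real_apply,
    torusVolume_real_closedBall_zero (by positivity) (by linarith), phi_two_mul]

lemma setIntegral_uniformTorus_not_adjacent (hd : 1 ≤ d) (hρ : 0 < ρ) (h4ρ : 4 * ρ < L) (m : ℕ) :
    ∫ t in (closedBall 0 ρ)ᶜ,
        (1 - (uniformTorus d L).real (closedBall 0 ρ ∪ closedBall t ρ)) ^ m ∂uniformTorus d L =
      (L ^ d)⁻¹ * (∫ y in torBall L (0 : Fin d → ℝ) (2 * ρ) \ torBall L (0 : Fin d → ℝ) ρ,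
          (1 - ρ ^ d * omegaVol d (torDist L (0 : Fin d → ℝ) y / ρ) / L ^ d) ^ m) +
        (1 - 2 ^ d * phi d ρ / L ^ d) * (1 - 2 * phi d ρ / L ^ d) ^ m := by
  have integrable : Integrable (fun t ↦
      (1 - (uniformTorus d L).real (closedBall 0 ρ ∪ closedBall t ρ)) ^ m) (uniformTorus d L) := by
    refine .of_bound (measurable_one_sub_uniformTorus_union_pow m).aestronglyMeasurable 1
      (ae_of_all _ fun t ↦ ?_)
    rw [norm_pow, Real.norm_of_nonneg (sub_nonneg.2 measureReal_le_one)]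
    exact pow_le_one₀ (sub_nonneg.2 measureReal_le_one) (sub_le_self 1 measureReal_nonneg)
  have split : (closedBall (0 : FlatTorus d L) ρ)ᶜ =
      closedBall 0 (2 * ρ) \ closedBall 0 ρ ∪ (closedBall 0 (2 * ρ))ᶜ := by
    have subset : closedBall (0 : FlatTorus d L) ρ ⊆ closedBall 0 (2 * ρ) :=
      closedBall_subset_closedBall (by linarith)
    ext t
    have := @subset t
    simp only [mem_compl_iff, mem_union, Set.mem_sdiff]
    tauto
  have disjoint : Disjoint (closedBall (0 : FlatTorus d L) (2 * ρ) \ closedBall 0 ρ)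
      (closedBall 0 (2 * ρ))ᶜ := disjoint_compl_right.mono_left sdiff_subset
  rw [split, setIntegral_union disjoint measurableSet_closedBall.compl integrable.integrableOn
    integrable.integrableOn, setIntegral_uniformTorus_annulus hd hρ h4ρ,
    setIntegral_uniformTorus_compl_closedBall hρ.le h4ρ]

lemma variance_isolated_box_eq_torus (hd : 1 ≤ d) (hρ : 0 ≤ ρ) (n : ℕ) :
    Var[fun w : Fin n → Fin d → ℝ ↦
        ∑ i, if range w ∩ torBall L (w i) ρ = {w i} then (1 : ℝ) else 0;
        Measure.pi fun _ ↦ uniformBox d L] =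
      Var[fun w ↦ ∑ i, {w | IsIsolatedPoint (dist · · ≤ ρ) w i}.indicator
          (1 : (Fin n → FlatTorus d L) → ℝ) w; Measure.pi fun _ ↦ uniformTorus d L] := by
  have : NullSingletonClass (uniformBox d L) := ⟨uniformBox_singleton hd L⟩
  have cover := measurePreserving_pi (fun _ : Fin n ↦ uniformBox d L)
    (fun _ ↦ uniformTorus d L) fun _ ↦ measurePreserving_toTorus_uniformBox
  have ae_box : ∀ᵐ w ∂Measure.pi (fun _ : Fin n ↦ uniformBox d L), ∀ i, w i ∈ box d L :=
    ae_all_iff.2 fun i ↦ (Measure.quasiMeasurePreserving_eval _ i).ae (ae_mem_box d L)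
  have measurable_count : Measurable fun w : Fin n → FlatTorus d L ↦
      ∑ i, {w | IsIsolatedPoint (dist · · ≤ ρ) w i}.indicator (1 : (Fin n → FlatTorus d L) → ℝ) w :=
    Finset.measurable_sum _ fun i _ ↦ measurable_one.indicator
      (measurableSet_setOf_isIsolatedPoint (measurableSet_setOf_dist_le ρ) i)
  rw [← cover.variance_fun_comp measurable_count.aemeasurable]
  refine variance_congr ?_
  filter_upwards [ae_box, ae_injective_pi n] with w hbox hinj
  refine Finset.sum_congr rfl fun i _ ↦ ?_
  simp only [range_inter_torBall_eq_singleton_iff hρ hinj hbox, indicator_apply, mem_ofPred_eq,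
    Pi.one_apply]

end UniformPoints

theorem variance_isolCount_formula_general {d : ℕ} (hd : 1 ≤ d) (n : ℕ) {L ρ : ℝ} (hρ : 0 < ρ)
    (h4ρ : 4 * ρ < L) :
    variance (fun ω : Fin n → Fin d → ℝ ↦
        ∑ i, if Set.range ω ∩ torBall L (ω i) ρ = {ω i} then (1 : ℝ) else 0)
        (Measure.pi fun _ ↦ uniformBox d L) =
      n * (1 - phi d ρ / L ^ d) ^ (n - 1) * (1 - (1 - phi d ρ / L ^ d) ^ (n - 1)) +
        n * ((n : ℝ) - 1) / L ^ d *
          (∫ y in torBall L (0 : Fin d → ℝ) (2 * ρ) \ torBall L (0 : Fin d → ℝ) ρ,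
            (1 - ρ ^ d * omegaVol d (torDist L (0 : Fin d → ℝ) y / ρ) / L ^ d) ^ (n - 2)) +
        n * ((n : ℝ) - 1) *
          ((1 - 2 ^ d * phi d ρ / L ^ d) * (1 - 2 * phi d ρ / L ^ d) ^ (n - 2) -
            (1 - phi d ρ / L ^ d) ^ (2 * n - 2)) := by
  have : Fact (0 < L) := ⟨by linarith⟩
  have exponent : 2 * n - 2 = (n - 1) * 2 := by lia
  rw [variance_isolated_box_eq_torus hd hρ.le, variance_sum_isIsolatedPoint_dist_le,
    setIntegral_uniformTorus_not_adjacent hd hρ h4ρ, uniformTorus_real_apply,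
    torusVolume_real_closedBall_zero hρ.le (by linarith), exponent, pow_mul]
  ring

lemma sideLen_pow {d : ℕ} (hd : d ≠ 0) (n : ℕ) : sideLen d n ^ d = n :=
  Real.rpow_inv_natCast_pow n.cast_nonneg hd

/-- Formula (7.3) of Goldstein–Penrose: exact variance of the number of isolated points. -/
theorem variance_isolCount_formula (d n : ℕ) (hd : 1 ≤ d) (hn : 4 ≤ n) (ρ : ℝ)
    (hρ : 0 < ρ) (h4ρ : 4 * ρ < sideLen d n) :
    variance (isolCount d n ρ) (binppLaw d n) =
      n * (1 - phi d ρ / n) ^ (n - 1) * (1 - (1 - phi d ρ / n) ^ (n - 1)) +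
        ((n : ℝ) - 1) *
          (∫ y in torBall (sideLen d n) (0 : Fin d → ℝ) (2 * ρ) \ torBall (sideLen d n) (0 : Fin d → ℝ) ρ,
            (1 - ρ ^ d * omegaVol d (torDist (sideLen d n) (0 : Fin d → ℝ) y / ρ) / n) ^ (n - 2) ∂volume) +
        n * ((n : ℝ) - 1) *
          ((1 - 2 ^ d * phi d ρ / n) * (1 - 2 * phi d ρ / n) ^ (n - 2) -
            (1 - phi d ρ / n) ^ (2 * n - 2)) := by
  have h := variance_isolCount_formula_general hd n hρ h4ρ
  rwa [sideLen_pow (by lia), mul_div_cancel_left₀ _ (Nat.cast_ne_zero.2 (by lia))] at h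

end
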